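/- arXiv:1208.5460 — 4 statements merged into one kernel-verified Lean document; each statement's English description precedes it below -/
import Mathlib

section
/- Let A be a finite nonempty set of positive integers. If D_A contains every sufficiently large positive integer (i.e., there exists N₀ such that every integer d ≥ N₀ lies in D_A), then δ_A ≥ 1/2. -/
open Filter MeasureTheory
open scoped ENNReal

/-- The finite continued fraction `[a₁,…,a_k] = 1/(a₁ + 1/(a₂ + ⋯ + 1/a_k))`. -/
def cf : List ℤ → ℚ
  | [] => 0
  | a :: t => 1 / ((a : ℚ) + cf t)

/-- `d ∈ DA A` iff `d` is the bottom-right entry of some element of the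
multiplicative semigroup generated by the matrices `((0,1),(1,a))`, `a ∈ A`. -/
def DA (A : Set ℤ) : Set ℤ :=
  {d : ℤ | ∃ l : List ℤ, l ≠ [] ∧ (∀ a ∈ l, a ∈ A) ∧
    ((l.map fun a => !![(0 : ℤ), 1; 1, a]).prod) 1 1 = d}

/-- `CA A` is the set of real numbers whose infinite continued fraction
expansion has all partial quotients in `A`. -/
def CA (A : Set ℤ) : Set ℝ :=
  {x : ℝ | ∃ a : ℕ → ℤ, (∀ n, a n ∈ A) ∧
    Tendsto (fun k : ℕ => ((cf (List.ofFn fun i : Fin k => a i) : ℚ) : ℝ))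
      atTop (nhds x)}

/-!
If `dimH (CA A) < s`, then `CA A` is covered by sets of diameters at most `rₙ` with `∑ rₙ ^ s` as
small as we like. Such a set meets `CA A` inside a single cylinder, given by a finite word with
continuant `q`, whose size `q⁻²` is at most a constant multiple of `rₙ`. Every infinite word starts
with one of these words, hence, by compactness, so does every sufficiently long finite word.
As `q(uv) ≥ q(u) q(v)`, the sums `Tₙ` of `q(w) ^ (-2 s)` over words of length at most `n` therefore
satisfy `Tₙ ≤ T_L + θ Tₙ` for fixed `L` and `θ < 1`, so that they stay bounded. Every `d` in `DA A`
is the continuant of some word, so `∑ d ^ (-2 s)` over `d` in `DA A` converges. For `s = 1 / 2` and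
`DA A` containing all large integers, this contradicts the divergence of the harmonic series.
-/

section Words

variable {α β ι : Type*}

/-- The word formed by the first `n` letters of the sequence `a`. -/
def initialWord (a : ℕ → α) (n : ℕ) : List α := List.ofFn fun i : Fin n ↦ a i

@[simp]
lemma length_initialWord (a : ℕ → α) (n : ℕ) : (initialWord a n).length = n :=
  List.length_ofFn

lemma initialWord_add (a : ℕ → α) (m n : ℕ) :
    initialWord a (m + n) = initialWord a m ++ initialWord (fun i ↦ a (m + i)) n :=
  List.ofFn_add

lemma initialWord_succ (a : ℕ → α) (n : ℕ) :
    initialWord a (n + 1) = a 0 :: initialWord (fun i ↦ a (i + 1)) n :=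
  List.ofFn_succ

lemma map_initialWord (f : α → β) (a : ℕ → α) (n : ℕ) :
    (initialWord a n).map f = initialWord (fun i ↦ f (a i)) n :=
  List.map_ofFn

lemma forall_mem_initialWord {p : α → Prop} {a : ℕ → α} (ha : ∀ i, p (a i)) (n : ℕ) :
    ∀ x ∈ initialWord a n, p x :=
  List.forall_mem_ofFn_iff.2 fun i ↦ ha i

lemma initialWord_congr {a b : ℕ → α} {n : ℕ} (h : ∀ i < n, a i = b i) :
    initialWord a n = initialWord b n :=
  congrArg List.ofFn (funext fun i : Fin n ↦ h i i.2)

lemma initialWord_getD_isPrefix (l : List α) (d : α) {n : ℕ} (hn : n ≤ l.length) :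
    initialWord (fun i ↦ l.getD i d) n <+: l := by
  rw [List.prefix_iff_eq_take, length_initialWord]
  refine List.ext_getElem (by simpa) fun i hi hi' ↦ ?_
  have : i < l.length := by simp at hi; omega
  simp [initialWord, this]

lemma isOpen_setOf_initialWord_eq [TopologicalSpace α] [DiscreteTopology α] (w : List α) :
    IsOpen {a : ℕ → α | initialWord a w.length = w} :=
  (isOpen_discrete {v : Fin w.length → α | List.ofFn v = w}).preimage
    (f := fun (a : ℕ → α) (i : Fin w.length) ↦ a i) (by fun_prop)

lemma exists_forall_length_le_exists_isPrefix [Finite α] (w : ι → List α)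
    (hw : ∀ a : ℕ → α, ∃ i, initialWord a (w i).length = w i) :
    ∃ L, ∀ l : List α, L ≤ l.length → ∃ i, w i <+: l := by
  let _ : TopologicalSpace α := ⊥
  have : DiscreteTopology α := ⟨rfl⟩
  obtain ⟨F, hF⟩ := isCompact_univ.elim_finite_subcover
    (fun i ↦ {a : ℕ → α | initialWord a (w i).length = w i})
    (fun i ↦ isOpen_setOf_initialWord_eq (w i)) fun a _ ↦ Set.mem_iUnion.2 (hw a)
  refine ⟨F.sup (fun i ↦ (w i).length) + 1, fun l hl ↦ ?_⟩
  have hl0 : l ≠ [] := List.ne_nil_of_length_pos (by omega)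
  obtain ⟨i, hi, hwi⟩ := Set.mem_iUnion₂.1 (hF (Set.mem_univ fun n ↦ l.getD n (l.head hl0)))
  have hlen : (w i).length ≤ l.length :=
    (Finset.le_sup (f := fun i ↦ (w i).length) hi).trans (by omega)
  exact ⟨i, hwi ▸ initialWord_getD_isPrefix l _ hlen⟩

end Words

section Renewal

variable {α ι : Type*} {f : List α → ℝ≥0∞}

lemma tsum_image_append_le (hmul : ∀ u v, f (u ++ v) ≤ f u * f v) (u : List α)
    (S : Set (List α)) : ∑' x : (u ++ ·) '' S, f x ≤ f u * ∑' v : S, f v := by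
  rw [tsum_image f (List.append_right_injective u).injOn, ← ENNReal.tsum_mul_left]
  exact ENNReal.tsum_le_tsum fun v ↦ hmul u v

lemma tsum_length_le_le_add_mul (hmul : ∀ u v, f (u ++ v) ≤ f u * f v) (w : ι → List α) {L : ℕ}
    (hL : ∀ l : List α, L ≤ l.length → ∃ i, w i <+: l) (n : ℕ) :
    ∑' l : {l : List α | l.length ≤ n}, f l ≤
      ∑' l : {l : List α | l.length ≤ L}, f l +
        (∑' i, f (w i)) * ∑' l : {l : List α | l.length ≤ n}, f l := by
  set S : ℕ → Set (List α) := fun n ↦ {l | l.length ≤ n}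
  have hcover : S n ⊆ S L ∪ ⋃ i, (w i ++ ·) '' S n := fun l hl ↦ by
    rcases le_total l.length L with h | h
    · exact Or.inl h
    · obtain ⟨i, v, rfl⟩ := hL l h
      have hv : v.length ≤ (w i ++ v).length := by simp
      exact Or.inr (Set.mem_iUnion.2 ⟨i, v, hv.trans hl, rfl⟩)
  calc ∑' l : S n, f l
      ≤ ∑' l : ↑(S L ∪ ⋃ i, (w i ++ ·) '' S n), f l := ENNReal.tsum_mono_subtype f hcover
    _ ≤ ∑' l : S L, f l + ∑' l : ↑(⋃ i, (w i ++ ·) '' S n), f l := ENNReal.tsum_union_le f _ _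
    _ ≤ ∑' l : S L, f l + ∑' i, ∑' l : (w i ++ ·) '' S n, f l := by
        gcongr
        exact ENNReal.tsum_iUnion_le_tsum f _
    _ ≤ ∑' l : S L, f l + ∑' i, f (w i) * ∑' l : S n, f l := by
        gcongr with i
        exact tsum_image_append_le hmul (w i) (S n)
    _ = ∑' l : S L, f l + (∑' i, f (w i)) * ∑' l : S n, f l := by rw [ENNReal.tsum_mul_right]

lemma le_div_one_sub_of_le_add_mul {x B θ : ℝ≥0∞} (hx : x ≠ ⊤) (hθ : θ < 1) (h : x ≤ B + θ * x) :
    x ≤ B / (1 - θ) := by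
  have hθx : θ * x ≠ ⊤ := ENNReal.mul_ne_top hθ.ne_top hx
  have hsplit : x = x * (1 - θ) + θ * x := by
    rw [mul_comm x, ← add_mul, tsub_add_cancel_of_le hθ.le, one_mul]
  have hsub : x * (1 - θ) + θ * x ≤ B + θ * x := hsplit ▸ h
  rw [ENNReal.le_div_iff_mul_le (.inl (tsub_pos_of_lt hθ).ne') (.inl (by simp))]
  exact (ENNReal.add_le_add_iff_right hθx).1 hsub

theorem tsum_ne_top_of_submultiplicative [Finite α] (hf : ∀ l, f l ≠ ⊤)
    (hmul : ∀ u v, f (u ++ v) ≤ f u * f v) (w : ι → List α)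
    (hw : ∀ a : ℕ → α, ∃ i, initialWord a (w i).length = w i) (hsum : ∑' i, f (w i) < 1) :
    ∑' l, f l ≠ ⊤ := by
  obtain ⟨L, hL⟩ := exists_forall_length_le_exists_isPrefix w hw
  set S : ℕ → Set (List α) := fun n ↦ {l | l.length ≤ n}
  have hS (n : ℕ) : ∑' l : S n, f l ≠ ⊤ := by
    have : Fintype (S n) := (List.finite_length_le α n).fintype
    rw [tsum_fintype]
    exact ENNReal.sum_ne_top.2 fun l _ ↦ hf l
  have hbound (n : ℕ) : ∑' l : S n, f l ≤ (∑' l : S L, f l) / (1 - ∑' i, f (w i)) :=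
    le_div_one_sub_of_le_add_mul (hS n) hsum (tsum_length_le_le_add_mul hmul w hL n)
  refine ne_top_of_le_ne_top
    (ENNReal.div_ne_top (hS L) (tsub_pos_of_lt hsum).ne') ?_
  rw [ENNReal.tsum_eq_iSup_sum]
  refine iSup_le fun F ↦ le_trans ?_ (hbound (F.sup List.length))
  rw [← Finset.tsum_subtype]
  exact ENNReal.tsum_mono_subtype f fun l hl ↦ Finset.le_sup (f := List.length) hl

end Renewal

lemma exists_cover_of_hausdorffMeasure_eq_zero {X : Type*} [EMetricSpace X] [MeasurableSpace X]
    [BorelSpace X] {s : ℝ} (hs : 0 < s) {S : Set X} (hS : μH[s] S = 0) {ε : ℝ≥0∞} (hε : ε ≠ 0) :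
    ∃ (t : ℕ → Set X) (r : ℕ → ℝ≥0∞), S ⊆ ⋃ n, t n ∧
      (∀ n, 0 < r n ∧ Metric.ediam (t n) ≤ r n) ∧ ∑' n, r n ^ s < ε := by
  have hε2 : 0 < ε / 2 := ENNReal.half_pos hε
  have hinf : ⨅ (t : ℕ → Set X) (_ : S ⊆ ⋃ n, t n) (_ : ∀ n, Metric.ediam (t n) ≤ 1),
      ∑' n, ⨆ _ : (t n).Nonempty, Metric.ediam (t n) ^ s < ε / 2 := by
    refine lt_of_le_of_lt ?_ (hS.trans_lt hε2)
    rw [Measure.hausdorffMeasure_apply]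
    exact le_iSup₂_of_le 1 zero_lt_one le_rfl
  simp only [iInf_lt_iff] at hinf
  obtain ⟨t, hcover, -, htsum⟩ := hinf
  obtain ⟨e, he, hesum⟩ := ENNReal.exists_pos_sum_of_countable' hε2.ne' ℕ
  refine ⟨t, fun n ↦ max (Metric.ediam (t n)) (e n ^ s⁻¹), hcover, fun n ↦
    ⟨lt_max_of_lt_right (ENNReal.rpow_pos_of_nonneg (he n) (by positivity)), le_max_left _ _⟩, ?_⟩
  have hterm (n : ℕ) : max (Metric.ediam (t n)) (e n ^ s⁻¹) ^ s ≤
      (⨆ _ : (t n).Nonempty, Metric.ediam (t n) ^ s) + e n := by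
    rw [(ENNReal.monotone_rpow_of_nonneg hs.le).map_max, ENNReal.rpow_inv_rpow hs.ne']
    refine max_le (le_add_right ?_) le_add_self
    rcases (t n).eq_empty_or_nonempty with h | h
    · simp [h, ENNReal.zero_rpow_of_pos hs]
    · simp [h]
  calc ∑' n, max (Metric.ediam (t n)) (e n ^ s⁻¹) ^ s
      ≤ ∑' n, ((⨆ _ : (t n).Nonempty, Metric.ediam (t n) ^ s) + e n) := ENNReal.tsum_le_tsum hterm
    _ = ∑' n, (⨆ _ : (t n).Nonempty, Metric.ediam (t n) ^ s) + ∑' n, e n := ENNReal.tsum_add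
    _ < ε / 2 + ε / 2 := ENNReal.add_lt_add htsum hesum
    _ = ε := ENNReal.add_halves ε

section Continuants

variable {u v w : List ℤ}

/-- The matrix `((p', p), (q', q))` of a word `w`, where `p / q` is the value of the continued
fraction `w` and `p' / q'` that of `w` without its last letter. -/
def cfMatrix (w : List ℤ) : Matrix (Fin 2) (Fin 2) ℤ :=
  (w.map fun a ↦ !![0, 1; 1, a]).prod

/-- The continuant of `w`, i.e. the denominator of the continued fraction with partial
quotients `w`. -/
def cfDenom (w : List ℤ) : ℤ := cfMatrix w 1 1

lemma cfMatrix_cons (a : ℤ) (w : List ℤ) :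
    cfMatrix (a :: w) = !![0, 1; 1, a] * cfMatrix w :=
  List.prod_cons

lemma cfMatrix_append (u v : List ℤ) : cfMatrix (u ++ v) = cfMatrix u * cfMatrix v := by
  simp [cfMatrix]

lemma cfMatrix_cons_zero (a : ℤ) (w : List ℤ) (j : Fin 2) :
    cfMatrix (a :: w) 0 j = cfMatrix w 1 j := by
  simp [cfMatrix_cons, Matrix.mul_apply]

lemma cfMatrix_cons_one (a : ℤ) (w : List ℤ) (j : Fin 2) :
    cfMatrix (a :: w) 1 j = cfMatrix w 0 j + a * cfMatrix w 1 j := by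
  simp [cfMatrix_cons, Matrix.mul_apply]

lemma cfMatrix_append_singleton_zero (w : List ℤ) (a : ℤ) (i : Fin 2) :
    cfMatrix (w ++ [a]) i 0 = cfMatrix w i 1 := by
  simp [cfMatrix, Matrix.mul_apply]

lemma cfMatrix_append_singleton_one (w : List ℤ) (a : ℤ) (i : Fin 2) :
    cfMatrix (w ++ [a]) i 1 = cfMatrix w i 0 + cfMatrix w i 1 * a := by
  simp [cfMatrix, Matrix.mul_apply]

lemma abs_det_cfMatrix (w : List ℤ) : |(cfMatrix w).det| = 1 := by
  induction w with
  | nil => simp [cfMatrix]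
  | cons a w ih => rw [cfMatrix_cons, Matrix.det_mul, abs_mul, ih]; simp

lemma cfMatrix_nonneg (hw : ∀ a ∈ w, 1 ≤ a) (i j : Fin 2) : 0 ≤ cfMatrix w i j := by
  induction w generalizing i with
  | nil => fin_cases i <;> fin_cases j <;> simp [cfMatrix]
  | cons a w ih =>
    obtain ⟨ha, hw⟩ := List.forall_mem_cons.1 hw
    have h0 := ih hw 0
    have h1 := ih hw 1
    fin_cases i
    · exact h1.trans_eq (cfMatrix_cons_zero a w j).symm
    · exact (by positivity : 0 ≤ cfMatrix w 0 j + a * cfMatrix w 1 j).trans_eq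
        (cfMatrix_cons_one a w j).symm

lemma fib_le_cfMatrix_one (hw : ∀ a ∈ w, 1 ≤ a) :
    Nat.fib w.length ≤ cfMatrix w 1 0 ∧ Nat.fib (w.length + 1) ≤ cfMatrix w 1 1 := by
  induction w using List.reverseRecOn with
  | nil => simp [cfMatrix]
  | append_singleton w a ih =>
    obtain ⟨h0, h1⟩ := ih fun c hc ↦ hw c (List.mem_append_left _ hc)
    have ha : 1 ≤ a := hw a (by simp)
    rw [cfMatrix_append_singleton_zero, cfMatrix_append_singleton_one, List.length_append,
      List.length_singleton, Nat.fib_add_two, Nat.cast_add]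
    exact ⟨h1, by nlinarith⟩

lemma cfDenom_pos (hw : ∀ a ∈ w, 1 ≤ a) : 0 < cfDenom w :=
  (Int.natCast_pos.2 (Nat.fib_pos.2 w.length.succ_pos)).trans_le (fib_le_cfMatrix_one hw).2

lemma length_le_cfDenom (hw : ∀ a ∈ w, 1 ≤ a) : w.length ≤ cfDenom w := by
  have hlen : w.length ≤ Nat.fib (w.length + 1) :=
    Nat.le_of_succ_le_succ (Nat.le_fib_add_one (w.length + 1))
  exact (Int.ofNat_le.2 hlen).trans (fib_le_cfMatrix_one hw).2

lemma cfMatrix_one_zero_le_cfDenom (hw : ∀ a ∈ w, 1 ≤ a) : cfMatrix w 1 0 ≤ cfDenom w := by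
  induction w using List.reverseRecOn with
  | nil => simp [cfMatrix, cfDenom]
  | append_singleton w a _ =>
    have hw' : ∀ c ∈ w, 1 ≤ c := fun c hc ↦ hw c (List.mem_append_left _ hc)
    have ha : 1 ≤ a := hw a (by simp)
    have h0 := cfMatrix_nonneg hw' 1 0
    have h1 := cfMatrix_nonneg hw' 1 1
    rw [cfDenom, cfMatrix_append_singleton_zero, cfMatrix_append_singleton_one]
    nlinarith

lemma cfDenom_mul_le_cfDenom_append (hu : ∀ a ∈ u, 1 ≤ a) (hv : ∀ a ∈ v, 1 ≤ a) :
    cfDenom u * cfDenom v ≤ cfDenom (u ++ v) := by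
  have := mul_nonneg (cfMatrix_nonneg hu 1 0) (cfMatrix_nonneg hv 0 1)
  simp only [cfDenom, cfMatrix_append, Matrix.mul_apply, Fin.sum_univ_two]
  linarith

lemma cf_mem_Icc (hw : ∀ a ∈ w, 1 ≤ a) : cf w ∈ Set.Icc 0 1 := by
  induction w with
  | nil => simp [cf]
  | cons a w ih =>
    obtain ⟨ha, hw⟩ := List.forall_mem_cons.1 hw
    have ha' : (1 : ℚ) ≤ a := by exact_mod_cast ha
    obtain ⟨h0, _⟩ := ih hw
    exact ⟨by rw [cf]; positivity, (div_le_one (by linarith)).2 (by linarith)⟩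

lemma one_div_le_cf {M : ℤ} (hw : ∀ a ∈ w, a ∈ Set.Icc 1 M) (hne : w ≠ []) :
    1 / ((M : ℚ) + 1) ≤ cf w := by
  obtain ⟨a, v, rfl⟩ := List.exists_cons_of_ne_nil hne
  obtain ⟨⟨_, haM⟩, hv⟩ := List.forall_mem_cons.1 hw
  have ha : (1 : ℚ) ≤ a := by exact_mod_cast (hw a List.mem_cons_self).1
  have haM' : (a : ℚ) ≤ M := by exact_mod_cast haM
  obtain ⟨h0, h1⟩ := cf_mem_Icc fun c hc ↦ (hv c hc).1
  exact one_div_le_one_div_of_le (by linarith) (by linarith)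

lemma cfDenom_le_denom (hw : ∀ a ∈ w, 1 ≤ a) {x : ℚ} (hx : 0 ≤ x) :
    (cfDenom w : ℚ) ≤ cfMatrix w 1 0 * x + cfDenom w := by
  have : (0 : ℚ) ≤ cfMatrix w 1 0 := by exact_mod_cast cfMatrix_nonneg hw 1 0
  exact le_add_of_nonneg_left (by positivity)

lemma cf_append (hw : ∀ a ∈ w, 1 ≤ a) (hu : 0 ≤ cf u) :
    cf (w ++ u) = (cfMatrix w 0 0 * cf u + cfMatrix w 0 1) /
      (cfMatrix w 1 0 * cf u + cfDenom w) := by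
  induction w with
  | nil => simp [cfMatrix, cfDenom]
  | cons a w ih =>
    obtain ⟨_, hw⟩ := List.forall_mem_cons.1 hw
    have hpos : (0 : ℚ) < cfMatrix w 1 0 * cf u + cfDenom w :=
      (Int.cast_pos.2 (cfDenom_pos hw)).trans_le (cfDenom_le_denom hw hu)
    rw [List.cons_append, cf, ih hw, add_div' _ _ _ hpos.ne', one_div_div]
    simp only [cfDenom, cfMatrix_cons_zero, cfMatrix_cons_one, Int.cast_add, Int.cast_mul]
    ring

lemma abs_cf_append_sub (hw : ∀ a ∈ w, 1 ≤ a) (hu : 0 ≤ cf u) (hv : 0 ≤ cf v) :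
    |cf (w ++ u) - cf (w ++ v)| = |cf u - cf v| /
      ((cfMatrix w 1 0 * cf u + cfDenom w) * (cfMatrix w 1 0 * cf v + cfDenom w)) := by
  have hq : (0 : ℚ) < cfDenom w := Int.cast_pos.2 (cfDenom_pos hw)
  have hqu := hq.trans_le (cfDenom_le_denom hw hu)
  have hqv := hq.trans_le (cfDenom_le_denom hw hv)
  have hdet : |(cfMatrix w 0 0 * cfDenom w - cfMatrix w 0 1 * cfMatrix w 1 0 : ℚ)| = 1 := by
    exact_mod_cast Matrix.det_fin_two (cfMatrix w) ▸ abs_det_cfMatrix w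
  rw [cf_append hw hu, cf_append hw hv, div_sub_div _ _ hqu.ne' hqv.ne', abs_div,
    abs_of_pos (mul_pos hqu hqv), ← one_mul |cf u - cf v|, ← hdet, ← abs_mul]
  ring_nf

lemma abs_cf_append_sub_le (hw : ∀ a ∈ w, 1 ≤ a) (hu : ∀ a ∈ u, 1 ≤ a) (hv : ∀ a ∈ v, 1 ≤ a) :
    |cf (w ++ u) - cf (w ++ v)| ≤ 1 / (cfDenom w : ℚ) ^ 2 := by
  obtain ⟨hu0, hu1⟩ := cf_mem_Icc hu
  obtain ⟨hv0, hv1⟩ := cf_mem_Icc hv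
  have hq : (0 : ℚ) < cfDenom w := Int.cast_pos.2 (cfDenom_pos hw)
  rw [abs_cf_append_sub hw hu0 hv0, sq]
  exact div_le_div₀ zero_le_one (abs_sub_le_of_nonneg_of_le hu0 hu1 hv0 hv1) (mul_pos hq hq)
    (mul_le_mul (cfDenom_le_denom hw hu0) (cfDenom_le_denom hw hv0) hq.le
      (hq.le.trans (cfDenom_le_denom hw hu0)))

lemma le_abs_cf_append_sub (hw : ∀ a ∈ w, 1 ≤ a) (hu : ∀ a ∈ u, 1 ≤ a) (hv : ∀ a ∈ v, 1 ≤ a) :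
    |cf u - cf v| / (2 * cfDenom w : ℚ) ^ 2 ≤ |cf (w ++ u) - cf (w ++ v)| := by
  have hq : (0 : ℚ) < cfDenom w := Int.cast_pos.2 (cfDenom_pos hw)
  have hle : (cfMatrix w 1 0 : ℚ) ≤ cfDenom w := by exact_mod_cast cfMatrix_one_zero_le_cfDenom hw
  have hdenom {x : ℚ} (hx : x ∈ Set.Icc 0 1) :
      0 < cfMatrix w 1 0 * x + cfDenom w ∧ cfMatrix w 1 0 * x + cfDenom w ≤ 2 * cfDenom w :=
    ⟨hq.trans_le (cfDenom_le_denom hw hx.1), by nlinarith [hx.1, hx.2]⟩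
  obtain ⟨hqu, hqu2⟩ := hdenom (cf_mem_Icc hu)
  obtain ⟨hqv, hqv2⟩ := hdenom (cf_mem_Icc hv)
  rw [abs_cf_append_sub hw (cf_mem_Icc hu).1 (cf_mem_Icc hv).1, sq]
  gcongr

lemma one_div_le_cf_cons_sub_cf_cons {c d M : ℤ} (hc : 1 ≤ c) (hcd : c < d) (hd : d ≤ M)
    (hu : ∀ a ∈ u, 1 ≤ a) (hv : ∀ a ∈ v, a ∈ Set.Icc 1 M) (hne : v ≠ []) :
    1 / ((M : ℚ) + 1) ^ 3 ≤ cf (c :: u) - cf (d :: v) := by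
  obtain ⟨hu0, hu1⟩ := cf_mem_Icc hu
  obtain ⟨hv0, hv1⟩ := cf_mem_Icc fun a ha ↦ (hv a ha).1
  have hv_lower := one_div_le_cf hv hne
  have hc' : (1 : ℚ) ≤ c := by exact_mod_cast hc
  have hcd' : (c : ℚ) + 1 ≤ d := by exact_mod_cast hcd
  have hd' : (d : ℚ) ≤ M := by exact_mod_cast hd
  have hM : (0 : ℚ) < M + 1 := by linarith
  have hcu : 0 < c + cf u := by linarith
  have hdv : 0 < d + cf v := by linarith
  calc 1 / ((M : ℚ) + 1) ^ 3 = (1 / (M + 1)) / ((M + 1) * (M + 1)) := by field_simp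
    _ ≤ ((d + cf v) - (c + cf u)) / ((c + cf u) * (d + cf v)) := by
        gcongr
        all_goals linarith
    _ = cf (c :: u) - cf (d :: v) := by
        rw [cf, cf, div_sub_div _ _ hcu.ne' hdv.ne', one_mul, mul_one]

lemma one_div_le_abs_cf_cons_sub_cf_cons {c d M : ℤ} (hcd : c ≠ d)
    (hu : ∀ a ∈ c :: u, a ∈ Set.Icc 1 M) (hv : ∀ a ∈ d :: v, a ∈ Set.Icc 1 M)
    (hune : u ≠ []) (hvne : v ≠ []) :
    1 / ((M : ℚ) + 1) ^ 3 ≤ |cf (c :: u) - cf (d :: v)| := by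
  obtain ⟨hc, hu⟩ := List.forall_mem_cons.1 hu
  obtain ⟨hd, hv⟩ := List.forall_mem_cons.1 hv
  rcases hcd.lt_or_gt with h | h
  · exact (one_div_le_cf_cons_sub_cf_cons hc.1 h hd.2 (fun a ha ↦ (hu a ha).1) hv hvne).trans
      (le_abs_self _)
  · rw [abs_sub_comm]
    exact (one_div_le_cf_cons_sub_cf_cons hd.1 h hc.2 (fun a ha ↦ (hv a ha).1) hu hune).trans
      (le_abs_self _)

end Continuants

section Limit

variable {a b : ℕ → ℤ}

lemma tendsto_one_div_cfDenom_sq (ha : ∀ i, 1 ≤ a i) :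
    Tendsto (fun n ↦ 1 / (cfDenom (initialWord a n) : ℝ) ^ 2) atTop (nhds 0) := by
  have hq : Tendsto (fun n ↦ (cfDenom (initialWord a n) : ℝ)) atTop atTop :=
    tendsto_atTop_mono (fun n ↦ by
      have := length_le_cfDenom (forall_mem_initialWord ha n)
      rw [length_initialWord] at this
      exact_mod_cast this) tendsto_natCast_atTop_atTop
  exact tendsto_const_nhds.div_atTop ((tendsto_pow_atTop two_ne_zero).comp hq)

lemma cauchySeq_cf (ha : ∀ i, 1 ≤ a i) : CauchySeq fun n ↦ (cf (initialWord a n) : ℝ) := by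
  refine cauchySeq_of_le_tendsto_0' _ (fun m n hmn ↦ ?_) (tendsto_one_div_cfDenom_sq ha)
  obtain ⟨k, rfl⟩ := Nat.exists_eq_add_of_le hmn
  have h := abs_cf_append_sub_le (forall_mem_initialWord ha m) (List.forall_mem_nil _)
    (forall_mem_initialWord (fun i ↦ ha (m + i)) k)
  rw [List.append_nil, ← initialWord_add] at h
  rw [Real.dist_eq]
  exact_mod_cast h

/-- The value of the infinite continued fraction with partial quotients `a`. It is a junk value
if the convergents have no limit, which cannot happen for positive partial quotients. -/
noncomputable def cfLim (a : ℕ → ℤ) : ℝ := limUnder atTop fun n ↦ (cf (initialWord a n) : ℝ)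

lemma tendsto_cf_cfLim (ha : ∀ i, 1 ≤ a i) :
    Tendsto (fun n ↦ (cf (initialWord a n) : ℝ)) atTop (nhds (cfLim a)) :=
  (cauchySeq_cf ha).tendsto_limUnder

lemma one_div_le_abs_cf_initialWord_sub {M : ℤ} (ha : ∀ i, a i ∈ Set.Icc 1 M)
    (hb : ∀ i, b i ∈ Set.Icc 1 M) {n : ℕ} (hab : ∀ i < n, a i = b i) (hne : a n ≠ b n) (k : ℕ) :
    1 / ((M : ℚ) + 1) ^ 3 / (2 * cfDenom (initialWord a n) : ℚ) ^ 2 ≤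
      |cf (initialWord a (n + (k + 2))) - cf (initialWord b (n + (k + 2)))| := by
  have hpos {c : ℕ → ℤ} (hc : ∀ i, c i ∈ Set.Icc 1 M) (m : ℕ) :=
    forall_mem_initialWord (fun i ↦ (hc i).1) m
  rw [initialWord_add a n, initialWord_add b n, ← initialWord_congr hab]
  refine le_trans ?_ (le_abs_cf_append_sub (hpos ha n) (hpos (fun i ↦ ha (n + i)) _)
    (hpos (fun i ↦ hb (n + i)) _))
  gcongr
  have hu := forall_mem_initialWord (fun i ↦ ha (n + i)) (k + 2)
  have hv := forall_mem_initialWord (fun i ↦ hb (n + i)) (k + 2)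
  rw [initialWord_succ] at hu hv ⊢
  rw [initialWord_succ _ (k + 1)]
  exact one_div_le_abs_cf_cons_sub_cf_cons hne hu hv (by simp [initialWord_succ])
    (by simp [initialWord_succ])

lemma one_div_cfDenom_sq_le {M : ℤ} (ha : ∀ i, a i ∈ Set.Icc 1 M)
    (hb : ∀ i, b i ∈ Set.Icc 1 M) {n : ℕ} (hab : ∀ i < n, a i = b i) (hne : a n ≠ b n) :
    1 / (cfDenom (initialWord a n) : ℝ) ^ 2 ≤ 4 * ((M : ℝ) + 1) ^ 3 * |cfLim a - cfLim b| := by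
  have hlim {c : ℕ → ℤ} (hc : ∀ i, c i ∈ Set.Icc 1 M) :
      Tendsto (fun k ↦ (cf (initialWord c (n + (k + 2))) : ℝ)) atTop (nhds (cfLim c)) :=
    (tendsto_cf_cfLim fun i ↦ (hc i).1).comp
      (tendsto_atTop_mono (fun k ↦ show k ≤ n + (k + 2) by omega) tendsto_id)
  have hM : (0 : ℝ) < M + 1 := by
    have : (1 : ℝ) ≤ M := by exact_mod_cast (ha 0).1.trans (ha 0).2
    linarith
  have hq : (0 : ℝ) < cfDenom (initialWord a n) :=
    Int.cast_pos.2 (cfDenom_pos (forall_mem_initialWord (fun i ↦ (ha i).1) n))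
  have hsep : 1 / ((M : ℝ) + 1) ^ 3 / (2 * cfDenom (initialWord a n) : ℝ) ^ 2 ≤
      |cfLim a - cfLim b| :=
    ge_of_tendsto' ((hlim ha).sub (hlim hb)).abs fun k ↦ by
      exact_mod_cast one_div_le_abs_cf_initialWord_sub ha hb hab hne k
  calc 1 / (cfDenom (initialWord a n) : ℝ) ^ 2
      = 4 * ((M : ℝ) + 1) ^ 3 *
          (1 / ((M : ℝ) + 1) ^ 3 / (2 * cfDenom (initialWord a n) : ℝ) ^ 2) := by
        field_simp; ring
    _ ≤ 4 * ((M : ℝ) + 1) ^ 3 * |cfLim a - cfLim b| := by gcongr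

end Limit

section Dimension

variable {A : Set ℤ}

/-- `1 / q²`, for `q` the continuant of `w`: up to a constant factor, the diameter of the set of
continued fractions whose expansion starts with `w`. -/
noncomputable def cylinderSize (w : List A) : ℝ≥0∞ :=
  ENNReal.ofReal (1 / (cfDenom (w.map (↑)) : ℝ) ^ 2)

lemma forall_mem_map_coe {p : ℤ → Prop} (hp : ∀ a ∈ A, p a) (w : List A) :
    ∀ a ∈ w.map (↑), p a :=
  List.forall_mem_map.2 fun a _ ↦ hp a a.2

lemma cylinderSize_append_le (hpos : ∀ a ∈ A, 1 ≤ a) (u v : List A) :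
    cylinderSize (u ++ v) ≤ cylinderSize u * cylinderSize v := by
  have hu := forall_mem_map_coe hpos u
  have hv := forall_mem_map_coe hpos v
  have hqu : (0 : ℝ) < cfDenom (u.map (↑)) := Int.cast_pos.2 (cfDenom_pos hu)
  have hqv : (0 : ℝ) < cfDenom (v.map (↑)) := Int.cast_pos.2 (cfDenom_pos hv)
  have hmul : (cfDenom (u.map (↑)) * cfDenom (v.map (↑)) : ℝ) ≤ cfDenom ((u ++ v).map (↑)) := by
    rw [List.map_append]
    exact_mod_cast cfDenom_mul_le_cfDenom_append hu hv
  rw [cylinderSize, cylinderSize, cylinderSize, ← ENNReal.ofReal_mul (by positivity)]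
  refine ENNReal.ofReal_le_ofReal ?_
  rw [div_mul_div_comm, one_mul, ← mul_pow]
  gcongr

lemma exists_cylinderSize_initialWord_le (hpos : ∀ a ∈ A, 1 ≤ a) (a : ℕ → A) {ε : ℝ≥0∞}
    (hε : 0 < ε) : ∃ n, cylinderSize (initialWord a n) ≤ ε := by
  have hlim : Tendsto (fun n ↦ cylinderSize (initialWord a n)) atTop (nhds 0) := by
    simpa [cylinderSize, map_initialWord] using ENNReal.tendsto_ofReal
      (tendsto_one_div_cfDenom_sq (a := fun i ↦ (a i : ℤ)) fun i ↦ hpos _ (a i).2)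
  exact (hlim.eventually_le_const hε).exists

lemma cylinderSize_initialWord_le {M : ℤ} (hA : ∀ a ∈ A, a ∈ Set.Icc 1 M) {a b : ℕ → A} {n : ℕ}
    (hab : ∀ i < n, a i = b i) (hne : a n ≠ b n) :
    cylinderSize (initialWord a n) ≤ ENNReal.ofReal (4 * ((M : ℝ) + 1) ^ 3) *
      edist (cfLim fun i ↦ a i) (cfLim fun i ↦ b i) := by
  have hM : (0 : ℝ) ≤ M + 1 := by
    have : (1 : ℝ) ≤ M := by exact_mod_cast (hA _ (a 0).2).1.trans (hA _ (a 0).2).2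
    linarith
  rw [edist_dist, Real.dist_eq, ← ENNReal.ofReal_mul (by positivity), cylinderSize,
    map_initialWord]
  exact ENNReal.ofReal_le_ofReal <| one_div_cfDenom_sq_le (fun i ↦ hA _ (a i).2)
    (fun i ↦ hA _ (b i).2) (fun i hi ↦ congrArg _ (hab i hi)) (Subtype.coe_injective.ne hne)

lemma exists_cylinderSize_le_mul_ediam {M : ℤ} (hA : ∀ a ∈ A, a ∈ Set.Icc 1 M) {U : Set ℝ}
    {a b : ℕ → A} (ha : cfLim (fun i ↦ a i) ∈ U) (hb : cfLim (fun i ↦ b i) ∈ U) (hab : a ≠ b) :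
    ∃ w : List A, (∀ c : ℕ → A, cfLim (fun i ↦ c i) ∈ U → initialWord c w.length = w) ∧
      cylinderSize w ≤ ENNReal.ofReal (4 * ((M : ℝ) + 1) ^ 3) * Metric.ediam U := by
  classical
  have hdiff : ∃ n, ∃ c : ℕ → A, cfLim (fun i ↦ c i) ∈ U ∧ a n ≠ c n :=
    (Function.ne_iff.1 hab).imp fun n hn ↦ ⟨b, hb, hn⟩
  have hagree (c : ℕ → A) (hc : cfLim (fun i ↦ c i) ∈ U) : ∀ i < Nat.find hdiff, a i = c i :=
    fun i hi ↦ by_contra fun h ↦ Nat.find_min hdiff hi ⟨c, hc, h⟩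
  obtain ⟨c, hc, hne⟩ := Nat.find_spec hdiff
  refine ⟨initialWord a (Nat.find hdiff), fun d hd ↦ ?_, ?_⟩
  · rw [length_initialWord]
    exact initialWord_congr fun i hi ↦ (hagree d hd i hi).symm
  · refine (cylinderSize_initialWord_le hA (hagree c hc) hne).trans ?_
    gcongr
    exact Metric.edist_le_ediam_of_mem ha hc

lemma exists_cylinderSize_le_mul [Nonempty A] {M : ℤ} (hA : ∀ a ∈ A, a ∈ Set.Icc 1 M) {U : Set ℝ}
    {r : ℝ≥0∞} (hr : 0 < r) (hU : Metric.ediam U ≤ r) :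
    ∃ w : List A, (∀ a : ℕ → A, cfLim (fun i ↦ a i) ∈ U → initialWord a w.length = w) ∧
      cylinderSize w ≤ ENNReal.ofReal (4 * ((M : ℝ) + 1) ^ 3) * r := by
  rcases {a : ℕ → A | cfLim (fun i ↦ a i) ∈ U}.subsingleton_or_nontrivial with hS | hS
  · obtain ⟨a, ha⟩ : ∃ a : ℕ → A, ∀ b : ℕ → A, cfLim (fun i ↦ b i) ∈ U → b = a := by
      rcases hS.eq_empty_or_singleton with h | ⟨a, h⟩
      · exact ⟨Classical.arbitrary _, fun b hb ↦ (h.subset hb).elim⟩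
      · exact ⟨a, fun b hb ↦ h.subset hb⟩
    have hM : (0 : ℝ) < 4 * ((M : ℝ) + 1) ^ 3 := by
      have : (1 : ℝ) ≤ M := by exact_mod_cast (hA _ (a 0).2).1.trans (hA _ (a 0).2).2
      have : (0 : ℝ) < M + 1 := by linarith
      positivity
    obtain ⟨n, hn⟩ := exists_cylinderSize_initialWord_le (fun a ha ↦ (hA a ha).1) a
      (ENNReal.mul_pos (ENNReal.ofReal_pos.2 hM).ne' hr.ne')
    exact ⟨initialWord a n, fun b hb ↦ by rw [ha b hb, length_initialWord], hn⟩
  · obtain ⟨a, ha, b, hb, hab⟩ := hS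
    obtain ⟨w, hw, hsize⟩ := exists_cylinderSize_le_mul_ediam (U := U) hA ha hb hab
    exact ⟨w, hw, hsize.trans (by gcongr)⟩

lemma cfLim_mem_CA (hpos : ∀ a ∈ A, 1 ≤ a) (a : ℕ → A) : cfLim (fun i ↦ a i) ∈ CA A :=
  ⟨fun i ↦ a i, fun i ↦ (a i).2, tendsto_cf_cfLim fun i ↦ hpos _ (a i).2⟩

lemma exists_words_tsum_cylinderSize_rpow_lt_one [Nonempty A] (hfin : A.Finite)
    (hpos : ∀ a ∈ A, 1 ≤ a) {s : NNReal} (hs : dimH (CA A) < s) :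
    ∃ w : ℕ → List A, (∀ a : ℕ → A, ∃ n, initialWord a (w n).length = w n) ∧
      ∑' n, cylinderSize (w n) ^ (s : ℝ) < 1 := by
  have hs0 : 0 < (s : ℝ) := NNReal.coe_pos.2 (ENNReal.coe_pos.1 (pos_of_gt hs))
  obtain ⟨M, hM⟩ := hfin.bddAbove
  have hA : ∀ a ∈ A, a ∈ Set.Icc 1 M := fun a ha ↦ ⟨hpos a ha, hM ha⟩
  set C : ℝ≥0∞ := ENNReal.ofReal (4 * ((M : ℝ) + 1) ^ 3)
  have hC : C ^ (s : ℝ) ≠ ⊤ := ENNReal.rpow_ne_top_of_nonneg hs0.le ENNReal.ofReal_ne_top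
  obtain ⟨t, r, hcover, hr, hsum⟩ := exists_cover_of_hausdorffMeasure_eq_zero hs0
    (hausdorffMeasure_of_dimH_lt hs) (ENNReal.inv_ne_zero.2 hC)
  choose w hprefix hsize using fun n ↦ exists_cylinderSize_le_mul hA (hr n).1 (hr n).2
  refine ⟨w, fun a ↦ ?_, ?_⟩
  · obtain ⟨n, hn⟩ := Set.mem_iUnion.1 (hcover (cfLim_mem_CA hpos a))
    exact ⟨n, hprefix n a hn⟩
  · calc ∑' n, cylinderSize (w n) ^ (s : ℝ)
        ≤ ∑' n, C ^ (s : ℝ) * r n ^ (s : ℝ) := ENNReal.tsum_le_tsum fun n ↦ by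
          rw [← ENNReal.mul_rpow_of_nonneg _ _ hs0.le]
          exact ENNReal.rpow_le_rpow (hsize n) hs0.le
      _ = C ^ (s : ℝ) * ∑' n, r n ^ (s : ℝ) := ENNReal.tsum_mul_left
      _ < 1 := ENNReal.mul_lt_of_lt_div' (by rwa [one_div])

theorem tsum_cylinderSize_rpow_ne_top (hfin : A.Finite) (hpos : ∀ a ∈ A, 1 ≤ a) {s : NNReal}
    (hs : dimH (CA A) < s) : ∑' w : List A, cylinderSize w ^ (s : ℝ) ≠ ⊤ := by
  have hne_top (w : List A) : cylinderSize w ^ (s : ℝ) ≠ ⊤ :=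
    ENNReal.rpow_ne_top_of_nonneg s.coe_nonneg ENNReal.ofReal_ne_top
  rcases isEmpty_or_nonempty A with hA | hA
  · rw [tsum_fintype]
    exact ENNReal.sum_ne_top.2 fun w _ ↦ hne_top w
  · have : Finite A := hfin
    obtain ⟨w, hw, hsum⟩ := exists_words_tsum_cylinderSize_rpow_lt_one hfin hpos hs
    refine tsum_ne_top_of_submultiplicative hne_top (fun u v ↦ ?_) w hw hsum
    rw [← ENNReal.mul_rpow_of_nonneg _ _ s.coe_nonneg]
    exact ENNReal.rpow_le_rpow (cylinderSize_append_le hpos u v) s.coe_nonneg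

lemma exists_word_cfDenom_eq {d : ℤ} (hd : d ∈ DA A) :
    ∃ w : List A, cfDenom (w.map (↑)) = d := by
  obtain ⟨l, -, hl, hld⟩ := hd
  lift l to List A using hl
  exact ⟨l, hld⟩

end Dimension

lemma not_summable_inv_of_forall_ge_mem {D : Set ℤ} {N : ℤ} (hD : ∀ d, N ≤ d → d ∈ D) :
    ¬ Summable fun d : D ↦ (d : ℝ)⁻¹ := fun h ↦ by
  let g (n : ℕ) : D := ⟨(n + N.toNat : ℕ), hD _ (by omega)⟩
  have hg : Function.Injective g := fun m n hmn ↦ by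
    have : ((m + N.toNat : ℕ) : ℤ) = (n + N.toNat : ℕ) := congrArg Subtype.val hmn
    omega
  have hsum : Summable fun n : ℕ ↦ ((n + N.toNat : ℕ) : ℝ)⁻¹ :=
    (h.comp_injective hg).congr fun _ ↦ congrArg (·⁻¹) (Int.cast_natCast _)
  exact Real.not_summable_natCast_inv ((summable_nat_add_iff N.toNat).1 hsum)

theorem stmt7_general {A : Set ℤ} (hfin : A.Finite) (hpos : ∀ a ∈ A, 1 ≤ a) (s : NNReal)
    (hdiv : ¬ Summable fun d : DA A ↦ (d : ℝ) ^ (-2 * s : ℝ)) : s ≤ dimH (CA A) := by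
  by_contra! hs
  choose w hw using fun d : DA A ↦ exists_word_cfDenom_eq d.2
  have hinj : Function.Injective w := fun d e h ↦ Subtype.ext (by rw [← hw d, ← hw e, h])
  have hterm (d : DA A) : (cylinderSize (w d) ^ (s : ℝ)).toReal = (d : ℝ) ^ (-2 * s : ℝ) := by
    have hd : (0 : ℝ) < d := by
      rw [← hw d]
      exact Int.cast_pos.2 (cfDenom_pos (forall_mem_map_coe hpos _))
    rw [← ENNReal.toReal_rpow, cylinderSize, hw, ENNReal.toReal_ofReal (by positivity), one_div,
      Real.rpow_mul hd.le, Real.rpow_neg hd.le, Real.rpow_two]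
  exact hdiv ((ENNReal.summable_toReal <| ne_top_of_le_ne_top
    (tsum_cylinderSize_rpow_ne_top hfin hpos hs)
    (ENNReal.tsum_comp_le_tsum_of_injective hinj _)).congr hterm)

theorem stmt7 (A : Set ℤ) (hfin : A.Finite) (hne : A.Nonempty)
    (hpos : ∀ a ∈ A, 1 ≤ a)
    (hfull : ∃ N₀ : ℤ, ∀ d : ℤ, N₀ ≤ d → d ∈ DA A) :
    (1 / 2 : ℝ≥0∞) ≤ dimH (CA A) := by
  obtain ⟨N₀, hN⟩ := hfull
  have hdiv := not_summable_inv_of_forall_ge_mem hN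
  simpa using stmt7_general hfin hpos (1 / 2) (by simpa [Real.rpow_neg_one] using hdiv)
end

section
/- Let A = {2,4,6,8,10}. For every matrix M ∈ Γ_A with second column (b,d) = (M₁₂, M₂₂), either b is even and d ≡ 1 (mod 4), or b ≡ 1 (mod 4) and d is even. Consequently every d ∈ D_A satisfies d ≢ 3 (mod 4), so D_A does not contain every sufficiently large positive integer. -/
/-!
Left multiplication by `((0,1),(1,a))` sends a column `(b, d)` to `(d, b + a d)`. If `m ∣ a`,
this exchanges the residue classes `(0 mod m, 1 mod m²)` and `(1 mod m², 0 mod m)`: a factor `m`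
of `a` and a factor `m` of `d` together make `a d` vanish modulo `m²`. The second column of the
identity lies in the first class. For `m ≥ 2` neither class allows `d ≡ -1 (mod m²)`; even partial
quotients are the case `m = 2`.
-/

section PartialQuotientMatrix

variable {R n : Type*} [NonAssocSemiring R] (a : R) (M : Matrix (Fin 2) n R) (j : n)

theorem partialQuotientMatrix_mul_apply_zero : (!![0, 1; 1, a] * M) 0 j = M 1 j := by
  simp [Matrix.mul_apply]

theorem partialQuotientMatrix_mul_apply_one : (!![0, 1; 1, a] * M) 1 j = M 0 j + a * M 1 j := by
  simp [Matrix.mul_apply]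

end PartialQuotientMatrix

/-- The invariant of the second column `(b, d)` of a product of matrices `((0,1),(1,a))` with
`m ∣ a`: it is `(0, 1)` or `(1, 0)`, where the entry `0` is known modulo `m` and the entry `1`
modulo `m ^ 2`. -/
def IsAlternatingColumn (m b d : ℤ) : Prop :=
  (b ≡ 0 [ZMOD m] ∧ d ≡ 1 [ZMOD m ^ 2]) ∨ (b ≡ 1 [ZMOD m ^ 2] ∧ d ≡ 0 [ZMOD m])

namespace IsAlternatingColumn

variable {m a b d : ℤ}

theorem zero_one (m : ℤ) : IsAlternatingColumn m 0 1 :=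
  Or.inl ⟨rfl, rfl⟩

theorem step (h : IsAlternatingColumn m b d) (ha : m ∣ a) :
    IsAlternatingColumn m d (b + a * d) := by
  rcases h with ⟨hb, hd⟩ | ⟨hb, hd⟩
  · have had : a * d ≡ 0 [ZMOD m] := Int.modEq_zero_iff_dvd.mpr (ha.mul_right d)
    exact Or.inr ⟨hd, hb.add had⟩
  · have had : a * d ≡ 0 [ZMOD m ^ 2] := by
      rw [Int.modEq_zero_iff_dvd, sq]
      exact mul_dvd_mul ha (Int.modEq_zero_iff_dvd.mp hd)
    exact Or.inl ⟨hd, hb.add had⟩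

theorem not_modEq_neg_one (h : IsAlternatingColumn m b d) (hm : 1 < m) :
    ¬ d ≡ -1 [ZMOD m ^ 2] := by
  intro hneg
  rcases h with ⟨-, hd⟩ | ⟨-, hd⟩
  · have two_dvd : m ^ 2 ∣ 2 := (hneg.symm.trans hd).dvd
    have := Int.le_of_dvd two_pos two_dvd
    nlinarith
  · have hneg' : d ≡ -1 [ZMOD m] := hneg.of_dvd (dvd_pow_self m two_ne_zero)
    have one_dvd : m ∣ 1 := (hneg'.symm.trans hd).dvd
    exact hm.not_ge (Int.le_of_dvd one_pos one_dvd)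

theorem list_prod {l : List ℤ} (hl : ∀ a ∈ l, m ∣ a) :
    IsAlternatingColumn m ((l.map fun a => !![(0 : ℤ), 1; 1, a]).prod 0 1)
      ((l.map fun a => !![(0 : ℤ), 1; 1, a]).prod 1 1) := by
  induction l with
  | nil => exact zero_one m
  | cons a l ih =>
    obtain ⟨ha, hl⟩ := List.forall_mem_cons.mp hl
    rw [List.map_cons, List.prod_cons, partialQuotientMatrix_mul_apply_zero,
      partialQuotientMatrix_mul_apply_one]
    exact (ih hl).step ha

end IsAlternatingColumn

theorem not_modEq_neg_one_of_mem_DA {A : Set ℤ} {m d : ℤ} (hm : 1 < m) (hA : ∀ a ∈ A, m ∣ a)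
    (hd : d ∈ DA A) : ¬ d ≡ -1 [ZMOD m ^ 2] := by
  obtain ⟨l, -, hl, rfl⟩ := hd
  exact (IsAlternatingColumn.list_prod fun a ha => hA a (hl a ha)).not_modEq_neg_one hm

theorem not_exists_forall_ge_mem_of_forall_not_modEq {S : Set ℤ} {n r : ℤ} (hn : n ≠ 0)
    (hS : ∀ d ∈ S, ¬ d ≡ r [ZMOD n]) : ¬ ∃ N₀ : ℤ, ∀ d : ℤ, N₀ ≤ d → d ∈ S := by
  rintro ⟨N₀, hN₀⟩
  have ge : N₀ ≤ N₀ + (r - N₀) % n := le_add_of_nonneg_right (Int.emod_nonneg _ hn)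
  have modEq : N₀ + (r - N₀) % n ≡ r [ZMOD n] := by
    simpa only [add_sub_cancel] using (Int.mod_modEq (r - N₀) n).add_left N₀
  exact hS _ (hN₀ _ ge) modEq

theorem stmt8_general {A : Set ℤ} {m : ℤ} (hm : 1 < m) (hA : ∀ a ∈ A, m ∣ a) :
    (∀ l : List ℤ, (∀ a ∈ l, a ∈ A) →
      IsAlternatingColumn m ((l.map fun a => !![(0 : ℤ), 1; 1, a]).prod 0 1)
        ((l.map fun a => !![(0 : ℤ), 1; 1, a]).prod 1 1)) ∧
    (∀ d ∈ DA A, ¬ d ≡ -1 [ZMOD m ^ 2]) ∧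
    ¬ (∃ N₀ : ℤ, ∀ d : ℤ, N₀ ≤ d → d ∈ DA A) := by
  have avoids : ∀ d ∈ DA A, ¬ d ≡ -1 [ZMOD m ^ 2] := fun _ => not_modEq_neg_one_of_mem_DA hm hA
  exact ⟨fun _ hl => .list_prod fun a ha => hA a (hl a ha), avoids,
    not_exists_forall_ge_mem_of_forall_not_modEq (by positivity) avoids⟩

theorem stmt8 :
    (∀ l : List ℤ, l ≠ [] → (∀ a ∈ l, a ∈ ({2, 4, 6, 8, 10} : Set ℤ)) →
      ((((l.map fun a => !![(0 : ℤ), 1; 1, a]).prod) 0 1 % 2 = 0 ∧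
        ((l.map fun a => !![(0 : ℤ), 1; 1, a]).prod) 1 1 % 4 = 1) ∨
       (((l.map fun a => !![(0 : ℤ), 1; 1, a]).prod) 0 1 % 4 = 1 ∧
        ((l.map fun a => !![(0 : ℤ), 1; 1, a]).prod) 1 1 % 2 = 0))) ∧
    (∀ d ∈ DA ({2, 4, 6, 8, 10} : Set ℤ), ¬ d % 4 = 3) ∧
    ¬ (∃ N₀ : ℤ, ∀ d : ℤ, N₀ ≤ d → d ∈ DA ({2, 4, 6, 8, 10} : Set ℤ)) := by
  have even : ∀ a ∈ ({2, 4, 6, 8, 10} : Set ℤ), 2 ∣ a := by simp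
  exact (stmt8_general one_lt_two even).imp_left fun column l _ => column l
end

section
/- Let c₁, c₂, c₃, c₄ be points of the Euclidean plane ℝ² and r₁, r₂, r₃, r₄ > 0 real numbers. (i) If the four circles with centers c_i and radii r_i are pairwise externally tangent, i.e. dist(c_i, c_j) = r_i + r_j for all i ≠ j, then Q(1/r₁, 1/r₂, 1/r₃, 1/r₄) = 0. (ii) If circles 2, 3, 4 are pairwise externally tangent and each is internally tangent to circle 1, i.e. dist(c_i, c_j) = r_i + r_j for 2 ≤ i < j ≤ 4 and dist(c₁, c_j) = r₁ − r_j for j = 2, 3, 4, then Q(−1/r₁, 1/r₂, 1/r₃, 1/r₄) = 0. -/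
/-- The Descartes quadratic form
`Q(b₁,b₂,b₃,b₄) = 2(b₁² + b₂² + b₃² + b₄²) − (b₁ + b₂ + b₃ + b₄)²`. -/
def descartesQ (b₁ b₂ b₃ b₄ : ℝ) : ℝ :=
  2 * (b₁ ^ 2 + b₂ ^ 2 + b₃ ^ 2 + b₄ ^ 2) - (b₁ + b₂ + b₃ + b₄) ^ 2

/-!
Give a circle that encloses the others a negative radius, so that in both configurations
`dist (c i) (c j) ^ 2 = (ρ i + ρ j) ^ 2` for `i ≠ j`. Four points of the plane satisfy a nontrivial
affine relation with weights `w`, and then `∑ j, w j * dist p (c j) ^ 2` does not depend on the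
point `p`. Evaluating it at the centers gives `4 * w i = 2 * S * b i + K * b i ^ 2`, where
`b i = 1 / ρ i`, `S = ∑ j, w j * ρ j`, and `K` does not depend on `i`. Summing this equation, and
this equation multiplied by `ρ i`, over `i` yields two homogeneous linear equations for
`(S, K) ≠ 0`; the vanishing of their determinant is the claim. The argument works verbatim for
affinely dependent centers of spheres in any dimension (the Soddy–Gosset theorem).
-/

open Finset

/-- The Soddy–Gosset quadratic form in the curvatures of mutually tangent spheres. The index type
has `n + 2` elements when the spheres lie in dimension `n`, so the coefficient `card ι - 2` is the
dimension; for four circles in the plane this is `descartesQ`. -/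
def gossetForm {ι : Type*} [Fintype ι] (b : ι → ℝ) : ℝ :=
  (Fintype.card ι - 2) * ∑ i, b i ^ 2 - (∑ i, b i) ^ 2

theorem gossetForm_fin_four (b : Fin 4 → ℝ) :
    gossetForm b = descartesQ (b 0) (b 1) (b 2) (b 3) := by
  simp only [gossetForm, descartesQ, Fintype.card_fin, Fin.sum_univ_four]
  norm_num

section Algebra

variable {ι : Type*} [Fintype ι] {S K : ℝ}

theorem gossetForm_eq_zero_of_linear_system {b : ι → ℝ} (hSK : S ≠ 0 ∨ K ≠ 0)
    (h₁ : 2 * (Fintype.card ι - 2) * S + K * ∑ i, b i = 0)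
    (h₂ : 2 * S * ∑ i, b i + K * ∑ i, b i ^ 2 = 0) :
    gossetForm b = 0 := by
  unfold gossetForm
  rcases hSK with hS | hK
  · refine (mul_eq_zero.mp ?_).resolve_left (mul_ne_zero two_ne_zero hS)
    linear_combination (∑ i, b i ^ 2) * h₁ - (∑ i, b i) * h₂
  · refine (mul_eq_zero.mp ?_).resolve_left hK
    linear_combination (Fintype.card ι - 2 : ℝ) * h₂ - (∑ i, b i) * h₁

theorem gossetForm_inv_eq_zero_of_weights {w ρ : ι → ℝ} (hρ : ∀ i, ρ i ≠ 0)
    (hw : ∑ i, w i = 0) (hw₀ : w ≠ 0) (hS : ∑ i, w i * ρ i = S)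
    (h : ∀ i, 4 * w i * ρ i ^ 2 = 2 * S * ρ i + K) :
    gossetForm ρ⁻¹ = 0 := by
  have weight_mul_eq (i : ι) : 4 * (w i * ρ i) = 2 * S + K * ρ⁻¹ i := by
    have := hρ i
    simp only [Pi.inv_apply]
    field_simp
    linear_combination h i
  have weight_eq (i : ι) : 4 * w i = 2 * S * ρ⁻¹ i + K * ρ⁻¹ i ^ 2 := by
    have := hρ i
    simp only [Pi.inv_apply]
    field_simp
    linear_combination h i
  have sum_weight_mul : 4 * S = Fintype.card ι * (2 * S) + K * ∑ i, ρ⁻¹ i :=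
    calc 4 * S = ∑ i, (2 * S + K * ρ⁻¹ i) := by simp only [← weight_mul_eq, ← mul_sum, hS]
      _ = _ := by rw [sum_add_distrib, sum_const, card_univ, nsmul_eq_mul, ← mul_sum]
  have sum_weight : 0 = 2 * S * ∑ i, ρ⁻¹ i + K * ∑ i, ρ⁻¹ i ^ 2 :=
    calc 0 = ∑ i, (2 * S * ρ⁻¹ i + K * ρ⁻¹ i ^ 2) := by
          simp only [← weight_eq, ← mul_sum, hw, mul_zero]
      _ = _ := by rw [sum_add_distrib, ← mul_sum, ← mul_sum]
  have S_ne_zero_or_K_ne_zero : S ≠ 0 ∨ K ≠ 0 := by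
    by_contra! hSK
    exact hw₀ (funext fun i => by simpa [hSK.1, hSK.2] using weight_eq i)
  exact gossetForm_eq_zero_of_linear_system S_ne_zero_or_K_ne_zero
    (by linear_combination -sum_weight_mul) sum_weight.symm

end Algebra

section Geometry

variable {ι V P : Type*} [SeminormedAddCommGroup V] [InnerProductSpace ℝ V]
  [PseudoMetricSpace P] [NormedAddTorsor V P] {c : ι → P} {w ρ r : ι → ℝ}

theorem sum_mul_dist_sq_eq_of_weightedVSub_eq_zero {s : Finset ι} (hw : ∑ i ∈ s, w i = 0)
    (hc : s.weightedVSub c w = (0 : V)) (p q : P) :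
    ∑ i ∈ s, w i * dist p (c i) ^ 2 = ∑ i ∈ s, w i * dist q (c i) ^ 2 := by
  have sum_smul_eq_zero : ∑ i ∈ s, w i • (c i -ᵥ q) = 0 := by
    rw [← weightedVSubOfPoint_apply, ← weightedVSub_eq_weightedVSubOfPoint_of_sum_eq_zero _ _ _ hw,
      hc]
  have dist_sq (i : ι) : dist p (c i) ^ 2 =
      dist q (c i) ^ 2 - 2 * inner ℝ (c i -ᵥ q) (p -ᵥ q) + dist p q ^ 2 := by
    rw [dist_comm p, dist_comm q, dist_eq_norm_vsub V (c i) p, dist_eq_norm_vsub V (c i) q,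
      dist_eq_norm_vsub V p q, ← vsub_sub_vsub_cancel_right (c i) p q, norm_sub_sq_real]
  have sum_inner_eq_zero : ∑ i ∈ s, w i * inner ℝ (c i -ᵥ q) (p -ᵥ q) = 0 := by
    simp only [← real_inner_smul_left, ← sum_inner, sum_smul_eq_zero, inner_zero_left]
  calc ∑ i ∈ s, w i * dist p (c i) ^ 2
      = ∑ i ∈ s, w i * dist q (c i) ^ 2 - 2 * ∑ i ∈ s, w i * inner ℝ (c i -ᵥ q) (p -ᵥ q)
          + (∑ i ∈ s, w i) * dist p q ^ 2 := by
        rw [mul_sum, sum_mul, ← sum_sub_distrib, ← sum_add_distrib]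
        exact sum_congr rfl fun i _ => by rw [dist_sq]; ring
    _ = ∑ i ∈ s, w i * dist q (c i) ^ 2 := by rw [sum_inner_eq_zero, hw]; ring

theorem pairwise_dist_sq_eq_update_neg [DecidableEq ι] {i₀ : ι}
    (hext : ∀ i j, i ≠ i₀ → j ≠ i₀ → i ≠ j → dist (c i) (c j) = r i + r j)
    (hint : ∀ j, j ≠ i₀ → dist (c i₀) (c j) = r i₀ - r j) :
    Pairwise fun i j => dist (c i) (c j) ^ 2 =
      (Function.update r i₀ (-r i₀) i + Function.update r i₀ (-r i₀) j) ^ 2 := by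
  intro i j hij
  rcases eq_or_ne i i₀ with rfl | hi
  · rw [hint j hij.symm, Function.update_self, Function.update_of_ne hij.symm]
    ring
  rcases eq_or_ne j i₀ with rfl | hj
  · rw [dist_comm, hint i hi, Function.update_self, Function.update_of_ne hi]
    ring
  · rw [hext i j hi hj hij, Function.update_of_ne hi, Function.update_of_ne hj]

variable [Fintype ι]

theorem sum_mul_dist_sq_of_pairwise_dist_sq_eq (hw : ∑ i, w i = 0)
    (h : Pairwise fun i j => dist (c i) (c j) ^ 2 = (ρ i + ρ j) ^ 2) (i : ι) :
    ∑ j, w j * dist (c i) (c j) ^ 2 =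
      2 * (∑ j, w j * ρ j) * ρ i + ∑ j, w j * ρ j ^ 2 - 4 * w i * ρ i ^ 2 := by
  classical
  have dist_sq (j : ι) :
      dist (c i) (c j) ^ 2 = (ρ i + ρ j) ^ 2 - if j = i then 4 * ρ i ^ 2 else 0 := by
    split_ifs with hij
    · rw [hij, dist_self]
      ring
    · rw [h (Ne.symm hij), sub_zero]
  calc ∑ j, w j * dist (c i) (c j) ^ 2
      = ∑ j, (w j * ρ i ^ 2 + w j * ρ j * (2 * ρ i) + w j * ρ j ^ 2
          - if j = i then w j * (4 * ρ i ^ 2) else 0) :=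
        sum_congr rfl fun j _ => by rw [dist_sq]; split_ifs <;> ring
    _ = (∑ j, w j) * ρ i ^ 2 + (∑ j, w j * ρ j) * (2 * ρ i) + ∑ j, w j * ρ j ^ 2
          - w i * (4 * ρ i ^ 2) := by
        simp only [sum_sub_distrib, sum_add_distrib, sum_mul, sum_ite_eq', mem_univ, if_true]
    _ = _ := by rw [hw]; ring

theorem gossetForm_inv_eq_zero_of_pairwise_dist_sq_eq (hc : ¬ AffineIndependent ℝ c)
    (hρ : ∀ i, ρ i ≠ 0) (h : Pairwise fun i j => dist (c i) (c j) ^ 2 = (ρ i + ρ j) ^ 2) :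
    gossetForm ρ⁻¹ = 0 := by
  rw [affineIndependent_iff_of_fintype] at hc
  push Not at hc
  obtain ⟨w, hw, hwc, i₀, hi₀⟩ := hc
  refine gossetForm_inv_eq_zero_of_weights (w := w)
    (K := ∑ j, w j * ρ j ^ 2 - ∑ j, w j * dist (c i₀) (c j) ^ 2) hρ hw
    (fun hw₀ => hi₀ (congrFun hw₀ i₀)) rfl fun i => ?_
  linear_combination sum_mul_dist_sq_eq_of_weightedVSub_eq_zero hw hwc (c i₀) (c i) +
    sum_mul_dist_sq_of_pairwise_dist_sq_eq hw h i

theorem stmt9_general [DecidableEq ι] (hc : ¬ AffineIndependent ℝ c) (hr : ∀ i, r i ≠ 0) (i₀ : ι) :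
    ((∀ i j, i ≠ j → dist (c i) (c j) = r i + r j) → gossetForm r⁻¹ = 0) ∧
    (((∀ i j, i ≠ i₀ → j ≠ i₀ → i ≠ j → dist (c i) (c j) = r i + r j) ∧
      (∀ j, j ≠ i₀ → dist (c i₀) (c j) = r i₀ - r j)) →
      gossetForm (Function.update r⁻¹ i₀ (-(r i₀)⁻¹)) = 0) := by
  refine ⟨fun h => ?_, fun ⟨hext, hint⟩ => ?_⟩
  · exact gossetForm_inv_eq_zero_of_pairwise_dist_sq_eq hc hr fun i j hij =>
      congrArg (· ^ 2) (h i j hij)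
  · rw [← inv_neg, Function.update_inv]
    refine gossetForm_inv_eq_zero_of_pairwise_dist_sq_eq hc (fun i => ?_)
      (pairwise_dist_sq_eq_update_neg hext hint)
    rcases eq_or_ne i i₀ with rfl | hi
    · simpa using hr i
    · simpa [hi] using hr i

end Geometry

theorem stmt9 (c : Fin 4 → EuclideanSpace ℝ (Fin 2)) (r : Fin 4 → ℝ)
    (hr : ∀ i, 0 < r i) :
    ((∀ i j : Fin 4, i ≠ j → dist (c i) (c j) = r i + r j) →
      descartesQ (1 / r 0) (1 / r 1) (1 / r 2) (1 / r 3) = 0) ∧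
    (((∀ i j : Fin 4, 0 < i → 0 < j → i ≠ j → dist (c i) (c j) = r i + r j) ∧
      (∀ j : Fin 4, 0 < j → dist (c 0) (c j) = r 0 - r j)) →
      descartesQ (-(1 / r 0)) (1 / r 1) (1 / r 2) (1 / r 3) = 0) := by
  have hc : ¬ AffineIndependent ℝ c :=
    (finrank_vectorSpan_le_iff_not_affineIndependent ℝ c (n := 2) (by simp)).mp
      ((Submodule.finrank_le _).trans_eq (by simp))
  simpa [gossetForm_fin_four, Fin.pos_iff_ne_zero] using stmt9_general hc (fun i => (hr i).ne') 0
end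

section
/- For every γ ∈ Γ and every coordinate j ∈ {1,2,3,4}, the entry (γ·v₀)_j is congruent modulo 24 to one of 2, 3, 6, 11, 14, 15, 18, 23. In particular, every curvature n ∈ B lies in one of these eight residue classes modulo 24. -/
/-- The four generators `S₁, S₂, S₃, S₄` of the Apollonian group. -/
def Sgen : Fin 4 → Matrix (Fin 4) (Fin 4) ℤ :=
  ![!![-1, 2, 2, 2; 0, 1, 0, 0; 0, 0, 1, 0; 0, 0, 0, 1],
    !![1, 0, 0, 0; 2, -1, 2, 2; 0, 0, 1, 0; 0, 0, 0, 1],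
    !![1, 0, 0, 0; 0, 1, 0, 0; 2, 2, -1, 2; 0, 0, 0, 1],
    !![1, 0, 0, 0; 0, 1, 0, 0; 0, 0, 1, 0; 2, 2, 2, -1]]

/-- Membership in the Apollonian group `Γ = ⟨S₁, S₂, S₃, S₄⟩`: since the
generators are involutions, the elements of `Γ` are exactly the products of
(possibly empty) words in the generators. -/
def ApollonianMem (γ : Matrix (Fin 4) (Fin 4) ℤ) : Prop :=
  ∃ l : List (Fin 4), γ = (l.map Sgen).prod

/-- The root quadruple `(−10, 18, 23, 27)` of the gasket. -/
def rootQuadruple : Fin 4 → ℤ := ![-10, 18, 23, 27]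

/-- `B` is the set of curvatures of circles in the gasket: the entries of the
vectors in the orbit `Γ·v₀`. -/
def curvatures : Set ℤ :=
  {n : ℤ | ∃ (γ : Matrix (Fin 4) (Fin 4) ℤ) (j : Fin 4),
    ApollonianMem γ ∧ (γ.mulVec rootQuadruple) j = n}

/-!
The generator `Sᵢ` replaces the entry `vᵢ` by `2s - 3vᵢ`, where `s` is the sum of the entries, and
hence `s` by `3s - 4vᵢ`. Modulo 3 the new entry is `-s` and the new sum is `-vᵢ`, so `Sᵢ` merely
exchanges `s` and `-vᵢ` among the five residues `s, -v₁, …, -v₄`. For the root quadruple none of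
these is 2, so no entry in the orbit is ever 1 modulo 3. For the prime 2, `vᵢ` changes by
`2s - 4vᵢ`: it is constant modulo 4 since `s` is even, and constant modulo 8 if it is odd, since
`s ≡ 2` modulo 4.
-/

open scoped Matrix

section Reflection

variable {ι : Type*} [Fintype ι] [DecidableEq ι] (i : ι) (v : ι → ℤ)

/-- The Apollonian reflection in the `i`-th coordinate, for tuples indexed by any finite type. It
exchanges the two roots of the Descartes equation `2 ∑ vⱼ² = (∑ vⱼ)²`, seen as a quadratic equation
in `vᵢ`; for `ι = Fin 4` it is the action of the generator `Sᵢ`. -/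
def apollonianReflection : ι → ℤ :=
  Function.update v i (2 * ∑ j, v j - 3 * v i)

/-- The family consisting of the sum of `v`, at the index `none`, and of the entries of `-v`.
Modulo 3, Apollonian reflections act on it by permuting the indices. -/
def augmentBySum : Option ι → ℤ
  | none => ∑ j, v j
  | some j => -v j

theorem sum_apollonianReflection :
    ∑ j, apollonianReflection i v j = 3 * ∑ j, v j - 4 * v i := by
  have hsum := Finset.add_sum_erase Finset.univ v (Finset.mem_univ i)
  rw [apollonianReflection, Finset.sum_update_of_mem (Finset.mem_univ i),
    Finset.sdiff_singleton_eq_erase]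
  linarith

theorem augmentBySum_apollonianReflection_modEq (o : Option ι) :
    augmentBySum (apollonianReflection i v) o ≡
      augmentBySum v (Equiv.swap none (some i) o) [ZMOD 3] := by
  rcases o with _ | j
  · rw [Equiv.swap_apply_left]
    simp only [augmentBySum, sum_apollonianReflection, Int.ModEq]
    omega
  · obtain rfl | hj := eq_or_ne j i
    · rw [Equiv.swap_apply_right]
      simp only [augmentBySum, apollonianReflection, Function.update_self, Int.ModEq]
      omega
    · rw [Equiv.swap_apply_of_ne_of_ne (Option.some_ne_none j) (by simpa using hj)]
      simp only [augmentBySum, apollonianReflection, Function.update_of_ne hj, Int.ModEq.refl]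

variable {v}

theorem apollonianReflection_modEq_four (hv : Even (∑ j, v j)) (j : ι) :
    apollonianReflection i v j ≡ v j [ZMOD 4] := by
  obtain rfl | hj := eq_or_ne j i
  · rw [apollonianReflection, Function.update_self, Int.ModEq]
    grind
  · rw [apollonianReflection, Function.update_of_ne hj]

theorem apollonianReflection_modEq_eight (hv : ∑ j, v j ≡ 2 [ZMOD 4]) {j : ι} (hj : Odd (v j)) :
    apollonianReflection i v j ≡ v j [ZMOD 8] := by
  obtain rfl | hji := eq_or_ne j i
  · rw [apollonianReflection, Function.update_self]
    rw [Int.odd_iff] at hj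
    rw [Int.ModEq] at hv ⊢
    omega
  · rw [apollonianReflection, Function.update_of_ne hji]

end Reflection

theorem Sgen_mulVec (i : Fin 4) (v : Fin 4 → ℤ) : Sgen i *ᵥ v = apollonianReflection i v := by
  ext j
  fin_cases i <;> fin_cases j <;>
    simp [Sgen, apollonianReflection, Matrix.mulVec, dotProduct, Fin.sum_univ_four] <;> ring

namespace ApollonianMem

variable {γ : Matrix (Fin 4) (Fin 4) ℤ} {v : Fin 4 → ℤ}

theorem mulVec_induction {P : (Fin 4 → ℤ) → Prop} (hγ : ApollonianMem γ) (base : P v)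
    (step : ∀ i w, P w → P (apollonianReflection i w)) : P (γ *ᵥ v) := by
  obtain ⟨l, rfl⟩ := hγ
  induction l with
  | nil => simpa only [List.map_nil, List.prod_nil, Matrix.one_mulVec] using base
  | cons i l ih =>
    rw [List.map_cons, List.prod_cons, ← Matrix.mulVec_mulVec, Sgen_mulVec]
    exact step i _ ih

theorem exists_perm_augmentBySum_modEq (hγ : ApollonianMem γ) (v : Fin 4 → ℤ) :
    ∃ σ : Equiv.Perm (Option (Fin 4)),
      ∀ o, augmentBySum (γ *ᵥ v) o ≡ augmentBySum v (σ o) [ZMOD 3] := by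
  refine hγ.mulVec_induction (P := fun w ↦ ∃ σ : Equiv.Perm (Option (Fin 4)),
    ∀ o, augmentBySum w o ≡ augmentBySum v (σ o) [ZMOD 3]) ⟨1, fun _ ↦ rfl⟩ ?_
  rintro i w ⟨σ, hσ⟩
  exact ⟨σ * Equiv.swap none (some i),
    fun o ↦ (augmentBySum_apollonianReflection_modEq i w o).trans (hσ _)⟩

theorem mulVec_modEq_four (hγ : ApollonianMem γ) (hv : Even (∑ j, v j)) (j : Fin 4) :
    (γ *ᵥ v) j ≡ v j [ZMOD 4] := by
  refine hγ.mulVec_induction (P := fun w ↦ ∀ j, w j ≡ v j [ZMOD 4]) (fun _ ↦ rfl) ?_ j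
  intro i w hw j
  have hsum : ∑ k, w k ≡ ∑ k, v k [ZMOD 4] := Int.ModEq.sum fun k _ ↦ hw k
  have heven : Even (∑ k, w k) := by
    rw [Int.even_iff] at hv ⊢
    exact (hsum.of_dvd (by decide : (2 : ℤ) ∣ 4)).eq.trans hv
  exact (apollonianReflection_modEq_four i heven j).trans (hw j)

theorem mulVec_modEq_eight (hγ : ApollonianMem γ) (hv : ∑ j, v j ≡ 2 [ZMOD 4]) {j : Fin 4}
    (hj : Odd (v j)) : (γ *ᵥ v) j ≡ v j [ZMOD 8] := by
  refine (hγ.mulVec_induction (P := fun w ↦ ∑ k, w k ≡ 2 [ZMOD 4] ∧ w j ≡ v j [ZMOD 8])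
    ⟨hv, rfl⟩ ?_).2
  rintro i w ⟨hsum, hw⟩
  refine ⟨?_, ?_⟩
  · rw [sum_apollonianReflection]
    rw [Int.ModEq] at hsum ⊢
    omega
  · have hodd : Odd (w j) := by
      rw [Int.odd_iff] at hj ⊢
      exact (hw.of_dvd (by decide : (2 : ℤ) ∣ 8)).eq.trans hj
    exact (apollonianReflection_modEq_eight i hsum hodd).trans hw

theorem mulVec_rootQuadruple_emod_three_ne_one (hγ : ApollonianMem γ) (j : Fin 4) :
    (γ *ᵥ rootQuadruple) j % 3 ≠ 1 := by
  obtain ⟨σ, hσ⟩ := hγ.exists_perm_augmentBySum_modEq rootQuadruple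
  have hroot : ∀ o, augmentBySum rootQuadruple o % 3 ≠ 2 := by decide
  have hneg : -(γ *ᵥ rootQuadruple) j % 3 ≠ 2 := (hσ (some j)).trans_ne (hroot _)
  omega

theorem mulVec_rootQuadruple_emod_four_or_eight (hγ : ApollonianMem γ) (j : Fin 4) :
    (γ *ᵥ rootQuadruple) j % 4 = 2 ∨ (γ *ᵥ rootQuadruple) j % 8 = 3 ∨
      (γ *ᵥ rootQuadruple) j % 8 = 7 := by
  have heven : Even (∑ j, rootQuadruple j) := by decide
  have hsum : ∑ j, rootQuadruple j ≡ 2 [ZMOD 4] := by decide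
  have hroot : rootQuadruple j % 4 = 2 ∨
      Odd (rootQuadruple j) ∧ (rootQuadruple j % 8 = 3 ∨ rootQuadruple j % 8 = 7) := by
    revert j
    decide
  rcases hroot with htwo | ⟨hodd, hres⟩
  · exact .inl ((hγ.mulVec_modEq_four heven j).eq.trans htwo)
  · right
    rwa [hγ.mulVec_modEq_eight hsum hodd]

theorem mulVec_rootQuadruple_emod_mem (hγ : ApollonianMem γ) (j : Fin 4) :
    (γ *ᵥ rootQuadruple) j % 24 ∈ ({2, 3, 6, 11, 14, 15, 18, 23} : Set ℤ) := by
  have hthree := hγ.mulVec_rootQuadruple_emod_three_ne_one j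
  have htwo := hγ.mulVec_rootQuadruple_emod_four_or_eight j
  simp only [Set.mem_insert_iff, Set.mem_singleton_iff]
  omega

end ApollonianMem

theorem stmt12 :
    (∀ γ : Matrix (Fin 4) (Fin 4) ℤ, ApollonianMem γ → ∀ j : Fin 4,
      (γ.mulVec rootQuadruple) j % 24 ∈
        ({2, 3, 6, 11, 14, 15, 18, 23} : Set ℤ)) ∧
    (∀ n ∈ curvatures, n % 24 ∈ ({2, 3, 6, 11, 14, 15, 18, 23} : Set ℤ)) := by
  refine ⟨fun γ hγ j ↦ hγ.mulVec_rootQuadruple_emod_mem j, ?_⟩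
  rintro n ⟨γ, j, hγ, rfl⟩
  exact hγ.mulVec_rootQuadruple_emod_mem j
end
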